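/- arXiv:1310.2206 — 2 statements merged into one kernel-verified Lean document; each statement's English description precedes it below -/
import Mathlib

section
/- Let 𝔖 = (Γ, P₀, P₁, 𝔅) be a group lifting structure and H ∈ SL(2, R). Then H has a group lifting factorization in 𝔖 (with no alternation or nonvanishing requirement on the lifting steps) if and only if H has a group lifting factorization in 𝔖 whose lifting cascade is irreducible; moreover the irreducible factorization can be chosen with the same gain factor K ∈ Γ and the same base matrix B ∈ 𝔅 as the given one. -/
open LaurentPolynomial Matrix

noncomputable section

abbrev R2 : Type := LaurentPolynomial ℂ
abbrev SL2 : Type := Matrix.SpecialLinearGroup (Fin 2) R2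

/-- Upper-triangular lifting matrix υ(S) = [[1, S],[0, 1]]. -/
def upl (S : R2) : SL2 := ⟨!![1, S; 0, 1], by simp [Matrix.det_fin_two_of]⟩

/-- Lower-triangular lifting matrix λ(S) = [[1, 0],[S, 1]]. -/
def lowl (S : R2) : SL2 := ⟨!![1, 0; S, 1], by simp [Matrix.det_fin_two_of]⟩
/-- Gain scaling matrix D_K = diag(1/K, K) as an element of SL(2, ℂ[z,z⁻¹]). -/
def gain (K : ℂˣ) : SL2 :=
  ⟨!![C ((K⁻¹ : ℂˣ) : ℂ), 0; 0, C (K : ℂ)], by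
    simp [Matrix.det_fin_two_of, ← _root_.map_mul, inv_mul_cancel₀ (Units.ne_zero K)]⟩
/-- The i-th lifting matrix of a cascade: υ(S) for update characteristic 0 (false,
lowpass), λ(S) for update characteristic 1 (true, highpass). -/
def liftMat (m : Bool) (S : R2) : SL2 := if m then lowl S else upl S

/-- Product of the first `n` steps of a lifting cascade:
`cascProd S m n = M_{n-1} ⋯ M_1 M_0` where `M_i = liftMat (m i) (S i)`. -/
def cascProd (S : ℕ → R2) (m : ℕ → Bool) : ℕ → SL2
  | 0 => 1
  | n + 1 => liftMat (m n) (S n) * cascProd S m n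

/-- A lifting cascade of length N is irreducible if all lifting filters are nonzero
and the update characteristics strictly alternate. -/
def IrredCasc (S : ℕ → R2) (m : ℕ → Bool) (N : ℕ) : Prop :=
  (∀ i < N, S i ≠ 0) ∧ ∀ i, i + 1 < N → m (i + 1) ≠ m i

/-- The lifting filters of the cascade belong to P₀ (lowpass updates) resp. P₁
(highpass updates). -/
def FiltersIn (P₀ P₁ : AddSubgroup R2) (S : ℕ → R2) (m : ℕ → Bool) (N : ℕ) : Prop :=
  ∀ i < N, (m i = false → S i ∈ P₀) ∧ (m i = true → S i ∈ P₁)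

/-!
Lifting matrices of one type multiply by adding their filters, so a cascade with filters in `P₀`
and `P₁` is the image in `SL(2, R)` of an element of the free product `P₀ * P₁`. An irreducible
cascade is precisely a reduced word of that free product, and every element of a free product is
represented by a reduced word.
-/

lemma liftMat_zero (b : Bool) : liftMat b 0 = 1 := by
  ext i j
  cases b <;> simp [liftMat, upl, lowl, Matrix.one_fin_two]

lemma liftMat_add (b : Bool) (s t : R2) : liftMat b (s + t) = liftMat b s * liftMat b t := by
  apply Subtype.ext
  rw [Matrix.SpecialLinearGroup.coe_mul]
  cases b <;> simp [liftMat, upl, lowl, add_comm]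

/-- The homomorphism `s ↦ liftMat b s` into `SL(2, R)`, with the additive group of
filters written multiplicatively as the free product of monoids requires. -/
def liftMatHom (b : Bool) : Multiplicative R2 →* SL2 where
  toFun s := liftMat b s.toAdd
  map_one' := liftMat_zero b
  map_mul' s t := liftMat_add b s.toAdd t.toAdd

section Cascades

open Monoid

variable {P : Bool → AddSubmonoid R2} {S : ℕ → R2} {m : ℕ → Bool} {N : ℕ}

variable (P) in
/-- The free product of the filter monoids `P false` (lowpass) and `P true` (highpass), whose
elements are the lifting cascades up to merging adjacent steps of the same type and
dropping zero steps. -/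
abbrev FilterCoprod : Type := CoprodI fun b => Multiplicative (P b)

variable (P) in
/-- Evaluation of a formal product of lifting steps as a matrix in `SL(2, R)`. -/
def cascadeHom : FilterCoprod P →* SL2 :=
  CoprodI.lift fun b => (liftMatHom b).comp (P b).subtype.toMultiplicative

lemma cascadeHom_of {b : Bool} (s : Multiplicative (P b)) :
    cascadeHom P (CoprodI.of s) = liftMat b s.toAdd :=
  CoprodI.lift_of (fun b => (liftMatHom b).comp (P b).subtype.toMultiplicative) s

lemma cascProd_mem_mrange_cascadeHom (hS : ∀ i < N, S i ∈ P (m i)) :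
    cascProd S m N ∈ MonoidHom.mrange (cascadeHom P) := by
  induction N with
  | zero => exact one_mem _
  | succ N ih =>
    rw [Nat.forall_lt_succ_right] at hS
    exact mul_mem ⟨_, cascadeHom_of (.ofAdd ⟨S N, hS.2⟩)⟩ (ih hS.1)

lemma cascProd_congr {S' : ℕ → R2} {m' : ℕ → Bool} (hS : ∀ i < N, S i = S' i)
    (hm : ∀ i < N, m i = m' i) : cascProd S m N = cascProd S' m' N := by
  induction N with
  | zero => rfl
  | succ N ih =>
    rw [Nat.forall_lt_succ_right] at hS hm
    simp only [cascProd, ih hS.1 hm.1, hS.2, hm.2]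

lemma cascProd_update_succ (b : Bool) (s : R2) :
    cascProd (Function.update S N s) (Function.update m N b) (N + 1) =
      liftMat b s * cascProd S m N := by
  simp only [cascProd, Function.update_self]
  rw [cascProd_congr (fun i hi => Function.update_of_ne hi.ne s S)
    (fun i hi => Function.update_of_ne hi.ne b m)]

lemma forall_lt_succ_update_mem (hS : ∀ i < N, S i ∈ P (m i)) {b : Bool} {s : R2} (hs : s ∈ P b) :
    ∀ i < N + 1, Function.update S N s i ∈ P (Function.update m N b i) := by
  refine Nat.forall_lt_succ_right.mpr ⟨fun i hi => ?_, ?_⟩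
  · simpa only [Function.update_of_ne hi.ne] using hS i hi
  · simpa only [Function.update_self] using hs

lemma IrredCasc.update_succ (h : IrredCasc S m N) {b : Bool} {s : R2} (hs : s ≠ 0)
    (hb : ∀ i, i + 1 = N → b ≠ m i) :
    IrredCasc (Function.update S N s) (Function.update m N b) (N + 1) := by
  refine ⟨Nat.forall_lt_succ_right.mpr ⟨fun i hi => ?_, ?_⟩, fun i hi => ?_⟩
  · simpa only [Function.update_of_ne hi.ne] using h.1 i hi
  · simpa only [Function.update_self] using hs
  · have hiN : i < N := Nat.lt_of_succ_lt_succ hi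
    rw [Function.update_of_ne hiN.ne]
    rcases (Nat.succ_le_of_lt hiN).eq_or_lt with hlast | hlt
    · simpa only [← hlast, Function.update_self] using hb i hlast
    · simpa only [Function.update_of_ne hlt.ne] using h.2 i hlt

-- The first letter of a word is the leftmost matrix, which is the last step of the cascade.
lemma exists_irredCasc_eq_cascadeHom_prod (w : CoprodI.Word fun b => Multiplicative (P b)) :
    ∃ (N : ℕ) (S : ℕ → R2) (m : ℕ → Bool), (∀ i < N, S i ∈ P (m i)) ∧ IrredCasc S m N ∧
      cascProd S m N = cascadeHom P w.prod ∧ ∀ i, i + 1 = N → w.fstIdx = some (m i) := by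
  induction w using CoprodI.Word.consRecOn with
  | empty => exact ⟨0, 0, fun _ => false, by simp, by simp [IrredCasc], by simp [cascProd], by simp⟩
  | cons b s w hb hs ih =>
    obtain ⟨N, S, m, hS, hirred, hprod, hlast⟩ := ih
    have hs0 : (s.toAdd : R2) ≠ 0 := fun h => hs (Subtype.ext h)
    have hne (i : ℕ) (hi : i + 1 = N) : b ≠ m i := fun h => hb (h ▸ hlast i hi)
    refine ⟨N + 1, _, _, forall_lt_succ_update_mem hS s.toAdd.2, hirred.update_succ hs0 hne, ?_, ?_⟩
    · rw [cascProd_update_succ, CoprodI.Word.prod_cons, map_mul, cascadeHom_of, hprod]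
    · intro i hi
      rw [CoprodI.Word.fstIdx_cons, Nat.succ_injective hi, Function.update_self]

theorem exists_irredCasc_cascProd_eq (hS : ∀ i < N, S i ∈ P (m i)) :
    ∃ (N' : ℕ) (S' : ℕ → R2) (m' : ℕ → Bool), (∀ i < N', S' i ∈ P (m' i)) ∧
      IrredCasc S' m' N' ∧ cascProd S' m' N' = cascProd S m N := by
  classical
  obtain ⟨x, hx⟩ := cascProd_mem_mrange_cascadeHom hS
  obtain ⟨w, rfl⟩ := CoprodI.Word.equiv.symm.surjective x
  obtain ⟨N', S', m', hS', hirred, hprod, -⟩ := exists_irredCasc_eq_cascadeHom_prod w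
  exact ⟨N', S', m', hS', hirred, hprod.trans hx⟩

end Cascades

theorem stmt5_general (Γ : Set ℂˣ) (P : Bool → AddSubmonoid R2) (𝔅 : Set SL2) (H : SL2) :
    ((∃ K ∈ Γ, ∃ B ∈ 𝔅, ∃ (N : ℕ) (S : ℕ → R2) (m : ℕ → Bool),
        (∀ i < N, S i ∈ P (m i)) ∧ H = gain K * cascProd S m N * B) ↔
      (∃ K ∈ Γ, ∃ B ∈ 𝔅, ∃ (N : ℕ) (S : ℕ → R2) (m : ℕ → Bool),
        (∀ i < N, S i ∈ P (m i)) ∧ IrredCasc S m N ∧ H = gain K * cascProd S m N * B)) ∧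
    (∀ K ∈ Γ, ∀ B ∈ 𝔅,
      (∃ (N : ℕ) (S : ℕ → R2) (m : ℕ → Bool),
        (∀ i < N, S i ∈ P (m i)) ∧ H = gain K * cascProd S m N * B) →
      (∃ (N : ℕ) (S : ℕ → R2) (m : ℕ → Bool),
        (∀ i < N, S i ∈ P (m i)) ∧ IrredCasc S m N ∧ H = gain K * cascProd S m N * B)) := by
  refine ⟨⟨?_, ?_⟩, ?_⟩
  · rintro ⟨K, hK, B, hB, N, S, m, hS, rfl⟩
    obtain ⟨N', S', m', hS', hirred, hprod⟩ := exists_irredCasc_cascProd_eq hS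
    exact ⟨K, hK, B, hB, N', S', m', hS', hirred, by rw [hprod]⟩
  · rintro ⟨K, hK, B, hB, N, S, m, hS, -, hH⟩
    exact ⟨K, hK, B, hB, N, S, m, hS, hH⟩
  · rintro K - B - ⟨N, S, m, hS, rfl⟩
    obtain ⟨N', S', m', hS', hirred, hprod⟩ := exists_irredCasc_cascProd_eq hS
    exact ⟨N', S', m', hS', hirred, by rw [hprod]⟩

/-- The pair `(P₀, P₁)` of filter groups as a family indexed by the update characteristic. -/
def filterFamily (P₀ P₁ : AddSubgroup R2) : Bool → AddSubmonoid R2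
  | false => P₀.toAddSubmonoid
  | true => P₁.toAddSubmonoid

lemma filtersIn_iff_mem_filterFamily {P₀ P₁ : AddSubgroup R2} {S : ℕ → R2} {m : ℕ → Bool} {N : ℕ} :
    FiltersIn P₀ P₁ S m N ↔ ∀ i < N, S i ∈ filterFamily P₀ P₁ (m i) := by
  refine forall₂_congr fun i _ => ?_
  cases m i <;> simp [filterFamily]

/-- H has a group lifting factorization in 𝔖 = (Γ, P₀, P₁, 𝔅) iff it has
one whose lifting cascade is irreducible; moreover the irreducible factorization can
be chosen with the same gain factor K and the same base matrix B. -/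
theorem stmt5 (Γ : Subgroup ℂˣ) (P₀ P₁ : AddSubgroup R2) (𝔅 : Set SL2) (H : SL2) :
    ((∃ K ∈ Γ, ∃ B ∈ 𝔅, ∃ (N : ℕ) (S : ℕ → R2) (m : ℕ → Bool),
        FiltersIn P₀ P₁ S m N ∧ H = gain K * cascProd S m N * B) ↔
      (∃ K ∈ Γ, ∃ B ∈ 𝔅, ∃ (N : ℕ) (S : ℕ → R2) (m : ℕ → Bool),
        FiltersIn P₀ P₁ S m N ∧ IrredCasc S m N ∧
          H = gain K * cascProd S m N * B)) ∧
    (∀ K ∈ Γ, ∀ B ∈ 𝔅,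
      (∃ (N : ℕ) (S : ℕ → R2) (m : ℕ → Bool),
        FiltersIn P₀ P₁ S m N ∧ H = gain K * cascProd S m N * B) →
      (∃ (N : ℕ) (S : ℕ → R2) (m : ℕ → Bool),
        FiltersIn P₀ P₁ S m N ∧ IrredCasc S m N ∧
          H = gain K * cascProd S m N * B)) := by
  simpa only [filtersIn_iff_mem_filterFamily, SetLike.mem_coe] using
    stmt5_general Γ (filterFamily P₀ P₁) 𝔅 H
end
end

section
/- The identity matrix admits a nontrivial irreducible lifting factorization of length 6 with linear-phase dyadic lifting filters; explicitly, in SL(2, ℂ[z,z⁻¹]): υ(−(z²/4)·(1 − z⁻¹)) · λ(−4·(1 + z⁻¹)) · υ((5/4)·(1 − z⁻¹)) · λ(−(1 + z⁻¹)) · υ(−z²·(1 − z⁻¹)) · λ(5·z⁻²·(1 + z⁻¹)) = I, where all six lifting filters are nonzero and the factors strictly alternate between upper- and lower-triangular lifting matrices. -/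
open LaurentPolynomial Matrix

noncomputable section

/-!
Split the third lifting step into two. If `s * r = 1 - u⁻¹` with `u` a unit, then three alternating
steps `υ(-us) λ(-r) υ(s)` already collapse to a lower-triangular matrix with diagonal `(u, u⁻¹)`.
Replacing `(u, s)` by `(u⁻¹, -us)` turns this into `υ(s) λ(-r) υ(-us)`, with diagonal `(u⁻¹, u)`.
The product of one word of each kind is unipotent lower triangular, so one further lower lifting
step cancels it, and the two adjacent upper steps merge. For Laurent polynomials take `u = z²` and
let `s`, `r` be multiples of `1 - z⁻¹` and `1 + z⁻¹` by inverse constants.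
-/

theorem units_inv_add_inv_ne_zero {R : Type*} [Semiring R] {a b : Rˣ} (h : (a + b : R) ≠ 0) :
    (↑a⁻¹ + ↑b⁻¹ : R) ≠ 0 := by
  have scaled : a * (↑a⁻¹ + ↑b⁻¹) * b = (a + b : R) := by simp [mul_add, add_mul, add_comm]
  intro h₀
  simp [← scaled, h₀] at h

section Lifting

variable {A : Type*} [CommRing A]

/-- The upper-triangular lifting matrix `υ(s)` over an arbitrary commutative ring; over `R2` it is
definitionally `upl s`. -/
def upperLift (s : A) : SpecialLinearGroup (Fin 2) A :=
  ⟨!![1, s; 0, 1], by simp [det_fin_two_of]⟩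

/-- The lower-triangular lifting matrix `λ(s)` over an arbitrary commutative ring; over `R2` it is
definitionally `lowl s`. -/
def lowerLift (s : A) : SpecialLinearGroup (Fin 2) A :=
  ⟨!![1, 0; s, 1], by simp [det_fin_two_of]⟩

@[simp]
theorem coe_upperLift (s : A) : (upperLift s : Matrix (Fin 2) (Fin 2) A) = !![1, s; 0, 1] := rfl

@[simp]
theorem coe_lowerLift (s : A) : (lowerLift s : Matrix (Fin 2) (Fin 2) A) = !![1, 0; s, 1] := rfl

theorem upl_eq_upperLift : upl = upperLift := rfl

theorem lowl_eq_lowerLift : lowl = lowerLift := rfl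

theorem upperLift_add (s t : A) : upperLift (s + t) = upperLift s * upperLift t := by
  ext i j
  fin_cases i <;> fin_cases j <;> simp [add_comm]

theorem coe_upperLift_neg_mul_lowerLift_mul_upperLift (u : Aˣ) {s r : A} (h : s * r = 1 - ↑u⁻¹) :
    (upperLift (-(u * s)) * lowerLift (-r) * upperLift s : Matrix (Fin 2) (Fin 2) A) =
      !![↑u, 0; -r, ↑u⁻¹] := by
  have h₀₀ : 1 + u * s * r = u := by linear_combination (u : A) * h - u.mul_inv
  have h₁₁ : 1 - r * s = ↑u⁻¹ := by linear_combination -h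
  simp [h₀₀, ← h₁₁, neg_add_eq_sub]

theorem coe_upperLift_mul_lowerLift_mul_upperLift_neg (u : Aˣ) {s r : A} (h : s * r = 1 - ↑u⁻¹) :
    (upperLift s * lowerLift (-r) * upperLift (-(u * s)) : Matrix (Fin 2) (Fin 2) A) =
      !![↑u⁻¹, 0; -r, ↑u] := by
  have h' : -(u * s) * r = 1 - ↑u⁻¹⁻¹ := by
    rw [inv_inv]
    linear_combination -(u : A) * h + u.mul_inv
  simpa using coe_upperLift_neg_mul_lowerLift_mul_upperLift u⁻¹ h'

theorem alternating_six_lifts_eq_one (u : Aˣ) {s₁ r₁ s₂ r₂ : A} (h₁ : s₁ * r₁ = 1 - ↑u⁻¹)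
    (h₂ : s₂ * r₂ = 1 - ↑u⁻¹) :
    upperLift (-(u * s₁)) * lowerLift (-r₁) * upperLift (s₁ + s₂) * lowerLift (-r₂) *
      upperLift (-(u * s₂)) * lowerLift (↑u⁻¹ * (r₁ + r₂)) = 1 := by
  have collapse : (upperLift (-(u * s₁)) * lowerLift (-r₁) * upperLift s₁ *
      (upperLift s₂ * lowerLift (-r₂) * upperLift (-(u * s₂))) *
        lowerLift (↑u⁻¹ * (r₁ + r₂)) : Matrix (Fin 2) (Fin 2) A) = 1 := by
    rw [coe_upperLift_neg_mul_lowerLift_mul_upperLift u h₁,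
      coe_upperLift_mul_lowerLift_mul_upperLift_neg u h₂]
    have h₁₀ : -(r₁ * ↑u⁻¹) + -(↑u⁻¹ * r₂) + ↑u⁻¹ * (r₁ + r₂) = 0 := by ring
    simp [one_fin_two, h₁₀]
  calc
    _ = upperLift (-(u * s₁)) * lowerLift (-r₁) * upperLift s₁ *
          (upperLift s₂ * lowerLift (-r₂) * upperLift (-(u * s₂))) *
            lowerLift (↑u⁻¹ * (r₁ + r₂)) := by simp only [upperLift_add, mul_assoc]
    _ = 1 := Subtype.ext collapse

end Lifting

section Laurent

variable {k : Type*}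

theorem C_mul_T_mul_ne_zero [Semiring k] {c : k} (hc : c ≠ 0) (m : ℤ) {f : k[T;T⁻¹]}
    (hf : f.coeff 0 = 1) : C c * T m * f ≠ 0 := by
  have coeff_m : (C c * T m * f).coeff m = c := by
    rw [← single_eq_C_mul_T, AddMonoidAlgebra.coeff_single_mul_eq_mul_coeff 0 (by simp), hf,
      mul_one]
  intro h
  simp [h, hc.symm] at coeff_m

theorem C_mul_one_sub_T_mul_C_inv_mul_one_add_T [CommRing k] (c : kˣ) (n : ℤ) :
    (C (c : k) * (1 - T n) * (C (↑c⁻¹ : k) * (1 + T n)) : k[T;T⁻¹]) = 1 - T (2 * n) := by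
  have hc : (C (c : k) * C (↑c⁻¹ : k) : k[T;T⁻¹]) = 1 := by rw [← map_mul, c.mul_inv, map_one]
  have hT : (T (2 * n) : k[T;T⁻¹]) = T n * T n := by rw [two_mul, T_add]
  linear_combination (1 - T n) * (1 + T n) * hc + hT

end Laurent

theorem stmt11_general {k : Type*} [CommRing k] (a b : kˣ) (hab : (a + b : k) ≠ 0)
    {n : ℤ} (hn : n ≠ 0) :
    let f₁ : k[T;T⁻¹] := -(C (a : k) * T (2 * n) * (1 - T (-n)))
    let f₂ : k[T;T⁻¹] := -(C (↑a⁻¹ : k) * (1 + T (-n)))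
    let f₃ : k[T;T⁻¹] := C (a + b : k) * (1 - T (-n))
    let f₄ : k[T;T⁻¹] := -(C (↑b⁻¹ : k) * (1 + T (-n)))
    let f₅ : k[T;T⁻¹] := -(C (b : k) * T (2 * n) * (1 - T (-n)))
    let f₆ : k[T;T⁻¹] := C (↑a⁻¹ + ↑b⁻¹ : k) * T (-(2 * n)) * (1 + T (-n))
    upperLift f₁ * lowerLift f₂ * upperLift f₃ * lowerLift f₄ * upperLift f₅ * lowerLift f₆ = 1 ∧
    (f₁ ≠ 0 ∧ f₂ ≠ 0 ∧ f₃ ≠ 0 ∧ f₄ ≠ 0 ∧ f₅ ≠ 0 ∧ f₆ ≠ 0) := by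
  refine ⟨?_, ?_⟩
  · let u : k[T;T⁻¹]ˣ := unitOfInvertible (T (2 * n))
    have hu (c : kˣ) : (C (c : k) * (1 - T (-n)) * (C (↑c⁻¹ : k) * (1 + T (-n))) : k[T;T⁻¹]) =
        1 - ↑u⁻¹ := by
      rw [C_mul_one_sub_T_mul_C_inv_mul_one_add_T, mul_neg, val_inv_unitOfInvertible, invOf_T]
    have T_left (c : k) : (C c * T (2 * n) * (1 - T (-n)) : k[T;T⁻¹]) =
        T (2 * n) * (C c * (1 - T (-n))) := by ring
    have f₆_eq : (C (↑a⁻¹ + ↑b⁻¹ : k) * T (-(2 * n)) * (1 + T (-n)) : k[T;T⁻¹]) =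
        T (-(2 * n)) * (C (↑a⁻¹ : k) * (1 + T (-n)) + C (↑b⁻¹ : k) * (1 + T (-n))) := by
      rw [map_add]
      ring
    rw [T_left, T_left, f₆_eq, map_add, add_mul]
    exact alternating_six_lifts_eq_one u (hu a) (hu b)
  · have : Nontrivial k := nontrivial_of_ne _ _ hab
    have hs : (1 - T (-n) : k[T;T⁻¹]).coeff 0 = 1 := by simp [hn]
    have hr : (1 + T (-n) : k[T;T⁻¹]).coeff 0 = 1 := by simp [hn]
    refine ⟨?_, ?_, ?_, ?_, ?_, ?_⟩
    · exact neg_ne_zero.2 (C_mul_T_mul_ne_zero a.ne_zero _ hs)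
    · simpa using C_mul_T_mul_ne_zero (neg_ne_zero.2 a⁻¹.ne_zero) 0 hr
    · simpa using C_mul_T_mul_ne_zero hab 0 hs
    · simpa using C_mul_T_mul_ne_zero (neg_ne_zero.2 b⁻¹.ne_zero) 0 hr
    · exact neg_ne_zero.2 (C_mul_T_mul_ne_zero b.ne_zero _ hs)
    · exact C_mul_T_mul_ne_zero (units_inv_add_inv_ne_zero hab) _ hr

/-- the identity of SL(2, ℂ[z,z⁻¹]) admits a nontrivial irreducible
length-6 lifting factorization with linear-phase dyadic lifting filters, strictly
alternating between upper- and lower-triangular lifting matrices: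
υ(−(z²/4)(1−z⁻¹)) λ(−4(1+z⁻¹)) υ((5/4)(1−z⁻¹)) λ(−(1+z⁻¹)) υ(−z²(1−z⁻¹)) λ(5z⁻²(1+z⁻¹)) = I. -/
theorem stmt11 :
    let f₁ : R2 := -(C (4⁻¹ : ℂ) * T 2 * (1 - T (-1)))
    let f₂ : R2 := C (-4 : ℂ) * (1 + T (-1))
    let f₃ : R2 := C ((5 : ℂ) / 4) * (1 - T (-1))
    let f₄ : R2 := -(1 + T (-1))
    let f₅ : R2 := -(T 2 * (1 - T (-1)))
    let f₆ : R2 := C (5 : ℂ) * T (-2) * (1 + T (-1))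
    upl f₁ * lowl f₂ * upl f₃ * lowl f₄ * upl f₅ * lowl f₆ = 1 ∧
    (f₁ ≠ 0 ∧ f₂ ≠ 0 ∧ f₃ ≠ 0 ∧ f₄ ≠ 0 ∧ f₅ ≠ 0 ∧ f₆ ≠ 0) := by
  have h := stmt11_general (Units.mk0 (4⁻¹ : ℂ) (by norm_num)) 1 (by norm_num) one_ne_zero
  simpa only [upl_eq_upperLift, lowl_eq_lowerLift, Units.val_mk0, Units.val_inv_eq_inv_val,
    Units.val_one, inv_inv, inv_one, map_one, map_neg, one_mul, mul_one, neg_mul,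
    (by norm_num : (4⁻¹ + 1 : ℂ) = 5 / 4), (by norm_num : (4 + 1 : ℂ) = 5)] using h
end
end
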